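/- If M is a bigraded complete k[ħ]-module and V is a bigraded k-module, then the restriction map Hom_{k[ħ]}(V[[ħ]]^{bgr}, M) → Hom_k(V, M) (precomposition with v ↦ v ⊗ 1) is an isomorphism of k[ħ]-modules (of internal hom spaces of bigraded modules). -/

import Mathlib

open scoped DirectSum

namespace Paper

variable (k : Type) [CommRing k] (V : ℤ × ℤ → ModuleCat.{0} k)

/-- The `(p,q)`-homogeneous component of `V[[ħ]]^{bgr}`: the product
`∏_{r ≥ 0} V^{p+r, q-r} ⊗ k·ħ^r`. -/
abbrev comp (pq : ℤ × ℤ) : Type := (r : ℕ) → V (pq.1 + (r : ℤ), pq.2 - (r : ℤ))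

/-- Transport along an equality of bidegrees. -/
def castV {pq pq' : ℤ × ℤ} (hh : pq = pq') : V pq →ₗ[k] V pq' := by
  subst hh; exact LinearMap.id

/-- Multiplication by `ħ` on a homogeneous component (shift of the power series). -/
def shiftFun (pq : ℤ × ℤ) (v : comp k V pq) : comp k V (pq.1 - 1, pq.2 + 1)
  | 0 => 0
  | (r+1) => castV k V
      (by simp only [Prod.mk.injEq]; constructor <;> (push_cast; ring)) (v r)

def shiftLin (pq : ℤ × ℤ) : comp k V pq →ₗ[k] comp k V (pq.1 - 1, pq.2 + 1) where
  toFun := shiftFun k V pq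
  map_add' x y := by
    funext r
    cases r with
    | zero => simp [shiftFun]
    | succ r => simp [shiftFun, map_add]
  map_smul' c x := by
    funext r
    cases r with
    | zero => simp [shiftFun]
    | succ r => simp [shiftFun, map_smul]

/-- The underlying bigraded `k`-module of `V[[ħ]]^{bgr}`. -/
abbrev Vh : Type := ⨁ pq : ℤ × ℤ, comp k V pq

/-- The action of `ħ` (of bidegree `(-1,1)`) on `V[[ħ]]^{bgr}`. -/
def hbar : Vh k V →ₗ[k] Vh k V :=
  DirectSum.toModule k (ℤ × ℤ) (Vh k V) (fun pq =>
    (DirectSum.lof k (ℤ × ℤ) (fun pq => comp k V pq) (pq.1 - 1, pq.2 + 1)).comp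
      (shiftLin k V pq))

/-- The bigrading of `V[[ħ]]^{bgr}`. -/
def VhGr (pq : ℤ × ℤ) : Submodule k (Vh k V) :=
  LinearMap.range (DirectSum.lof k (ℤ × ℤ) (fun pq => comp k V pq) pq)

/-- The inclusion of a component of `V` as the `ħ⁰`-coefficients. -/
def inclFun (pq : ℤ × ℤ) (v : V pq) : comp k V pq
  | 0 => castV k V (by simp) v
  | _+1 => 0

def inclComp (pq : ℤ × ℤ) : V pq →ₗ[k] comp k V pq where
  toFun := inclFun k V pq
  map_add' x y := by
    funext r
    cases r with
    | zero => simp [inclFun, map_add]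
    | succ r => simp [inclFun]
  map_smul' c x := by
    funext r
    cases r with
    | zero => simp [inclFun, map_smul]
    | succ r => simp [inclFun]

/-- The underlying bigraded module of `V` itself. -/
abbrev Vtot : Type := ⨁ pq : ℤ × ℤ, (V pq : Type)

/-- The canonical inclusion `V → V[[ħ]]^{bgr}`, `v ↦ v ⊗ 1`. -/
def incl : Vtot k V →ₗ[k] Vh k V :=
  DirectSum.toModule k (ℤ × ℤ) (Vh k V) (fun pq =>
    (DirectSum.lof k (ℤ × ℤ) (fun pq => comp k V pq) pq).comp (inclComp k V pq))

/-- The bigrading of `V`. -/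
def VtotGr (pq : ℤ × ℤ) : Submodule k (Vtot k V) :=
  LinearMap.range (DirectSum.lof k (ℤ × ℤ) (fun pq => ((V pq : Type))) pq)

/-- A homogeneous morphism of bidegree `c` between bigraded modules. -/
def IsHomogMap {X Y : Type} [AddCommGroup X] [Module k X] [AddCommGroup Y] [Module k Y]
    (GX : ℤ × ℤ → Submodule k X) (GY : ℤ × ℤ → Submodule k Y)
    (c : ℤ × ℤ) (g : X →ₗ[k] Y) : Prop :=
  ∀ (pq : ℤ × ℤ) (x : X), x ∈ GX pq → g x ∈ GY (pq + c)

/-- A morphism belonging to the internal hom of bigraded modules: a finite sum of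
homogeneous morphisms. -/
def IsInternalHom {X Y : Type} [AddCommGroup X] [Module k X] [AddCommGroup Y] [Module k Y]
    (GX : ℤ × ℤ → Submodule k X) (GY : ℤ × ℤ → Submodule k Y) (g : X →ₗ[k] Y) : Prop :=
  ∃ (S : Finset (ℤ × ℤ)) (gc : ℤ × ℤ → (X →ₗ[k] Y)),
    (∀ c, IsHomogMap k GX GY c (gc c)) ∧ g = ∑ c ∈ S, gc c

theorem lof_castV {pq pq' : ℤ × ℤ} (hh : pq = pq') (x : V pq) :
    DirectSum.lof k (ℤ × ℤ) (fun pq => ((V pq : Type))) pq' (castV k V hh x) =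
      DirectSum.lof k (ℤ × ℤ) (fun pq => ((V pq : Type))) pq x := by
  subst hh; rfl

section
variable {M : Type} [AddCommGroup M] [Module k M]

theorem pow_mem_gr (GM : ℤ × ℤ → Submodule k M) (h : M →ₗ[k] M)
    (hhom : ∀ (pq : ℤ × ℤ) (x : M), x ∈ GM pq → h x ∈ GM (pq.1 - 1, pq.2 + 1))
    (r : ℕ) : ∀ (pq : ℤ × ℤ) (x : M), x ∈ GM pq →
      (h ^ r) x ∈ GM (pq.1 - (r : ℤ), pq.2 + (r : ℤ)) := by
  induction r with
  | zero => intro pq x hx; simpa using hx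
  | succ r ih =>
    intro pq x hx
    have := hhom _ _ (ih pq x hx)
    rw [pow_succ', Module.End.mul_apply]
    convert this using 2
    push_cast
    ext <;> simp <;> ring

theorem range_pow_succ_le (h : M →ₗ[k] M) (N : ℕ) (x : M)
    (hx : x ∈ LinearMap.range (h ^ (N + 1))) : x ∈ LinearMap.range (h ^ N) := by
  obtain ⟨y, rfl⟩ := hx
  exact ⟨h y, by rw [pow_succ, Module.End.mul_apply]⟩

theorem map_range_pow (h : M →ₗ[k] M) (N : ℕ) (x : M)
    (hx : x ∈ LinearMap.range (h ^ N)) : h x ∈ LinearMap.range (h ^ N) := by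
  obtain ⟨y, rfl⟩ := hx
  exact ⟨h y, by rw [← Module.End.mul_apply, ← Module.End.mul_apply, ← pow_succ, ← pow_succ']⟩

/-- One term of the series. -/
def term (h : M →ₗ[k] M) (g : Vtot k V →ₗ[k] M) (pq : ℤ × ℤ) (r : ℕ) : comp k V pq →ₗ[k] M :=
  ((h ^ r).comp (g.comp (DirectSum.lof k (ℤ × ℤ) (fun pq => ((V pq : Type)))
    (pq.1 + (r : ℤ), pq.2 - (r : ℤ))))).comp (LinearMap.proj r)

/-- Partial sums of the series. -/
def psum (h : M →ₗ[k] M) (g : Vtot k V →ₗ[k] M) (pq : ℤ × ℤ) (N : ℕ) : comp k V pq →ₗ[k] M :=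
  ∑ r ∈ Finset.range N, term k V h g pq r

theorem psum_shift (h : M →ₗ[k] M) (g : Vtot k V →ₗ[k] M) (pq : ℤ × ℤ) (N : ℕ)
    (v : comp k V pq) :
    psum k V h g (pq.1 - 1, pq.2 + 1) (N + 1) (shiftLin k V pq v) =
      h (psum k V h g pq N v) := by
  have h0 : term k V h g (pq.1 - 1, pq.2 + 1) 0 (shiftLin k V pq v) = 0 := by
    have : shiftLin k V pq v 0 = 0 := rfl
    simp only [term, LinearMap.comp_apply, LinearMap.proj_apply, this, map_zero]
  have h1 : ∀ r, term k V h g (pq.1 - 1, pq.2 + 1) (r + 1) (shiftLin k V pq v) =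
      h (term k V h g pq r v) := by
    intro r
    have : shiftLin k V pq v (r + 1) = castV k V
      (by simp only [Prod.mk.injEq]; constructor <;> (push_cast; ring)) (v r) := rfl
    simp only [term, LinearMap.comp_apply, LinearMap.proj_apply, this, lof_castV]
    rw [pow_succ', Module.End.mul_apply]
  simp only [psum, LinearMap.sum_apply, LinearMap.add_apply, Finset.sum_range_succ', h0, h1, add_zero, map_sum]

theorem psum_incl (h : M →ₗ[k] M) (g : Vtot k V →ₗ[k] M) (pq : ℤ × ℤ) (N : ℕ) (v : V pq) :
    psum k V h g pq (N + 1) (inclComp k V pq v) =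
      g (DirectSum.lof k (ℤ × ℤ) (fun pq => ((V pq : Type))) pq v) := by
  have h0 : term k V h g pq 0 (inclComp k V pq v) =
      g (DirectSum.lof k (ℤ × ℤ) (fun pq => ((V pq : Type))) pq v) := by
    have : inclComp k V pq v 0 = castV k V (by simp) v := rfl
    simp only [term, LinearMap.comp_apply, LinearMap.proj_apply, this, lof_castV, pow_zero,
      Module.End.one_apply]
  have h1 : ∀ r, term k V h g pq (r + 1) (inclComp k V pq v) = 0 := by
    intro r
    have : inclComp k V pq v (r + 1) = 0 := rfl
    simp only [term, LinearMap.comp_apply, LinearMap.proj_apply, this, map_zero]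
  simp only [psum, LinearMap.sum_apply, LinearMap.add_apply, Finset.sum_range_succ', h0, h1, Finset.sum_const_zero,
    zero_add]

theorem exists_ext (GM : ℤ × ℤ → Submodule k M)
    (h : M →ₗ[k] M)
    (hhom : ∀ (pq : ℤ × ℤ) (x : M), x ∈ GM pq → h x ∈ GM (pq.1 - 1, pq.2 + 1))
    (sep : ∀ x, (∀ N : ℕ, x ∈ LinearMap.range (h ^ N)) → x = 0)
    (hcompl : ∀ (pq : ℤ × ℤ) (x : ℕ → M), (∀ N, x N ∈ GM pq) →
      (∀ N, x (N+1) - x N ∈ LinearMap.range (h ^ N)) →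
      ∃ y ∈ GM pq, ∀ N, y - x N ∈ LinearMap.range (h ^ N))
    (c : ℤ × ℤ) (g : Vtot k V →ₗ[k] M) (hg : IsHomogMap k (VtotGr k V) GM c g) :
    ∃ f : Vh k V →ₗ[k] M, (∀ x, f (hbar k V x) = h (f x)) ∧
      IsHomogMap k (VhGr k V) GM c f ∧ f.comp (incl k V) = g := by
  have hterm : ∀ pq r v, term k V h g pq r v ∈ GM (pq + c) := by
    intro pq r v
    have := pow_mem_gr k GM h hhom r _ _ (hg (pq.1 + (r : ℤ), pq.2 - (r : ℤ)) _ ⟨v r, rfl⟩)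
    simp only [term, LinearMap.comp_apply, LinearMap.proj_apply]
    convert this using 2
    ext <;> simp <;> ring
  have key : ∀ pq (v : comp k V pq), ∃ y ∈ GM (pq + c), ∀ N,
      y - psum k V h g pq N v ∈ LinearMap.range (h ^ N) := by
    intro pq v
    refine hcompl (pq + c) (fun N => psum k V h g pq N v) ?_ ?_
    · intro N
      simp only [psum, LinearMap.sum_apply]
      exact Submodule.sum_mem _ fun r _ => hterm pq r v
    · intro N
      simp only [psum, LinearMap.sum_apply, LinearMap.add_apply, Finset.sum_range_succ, add_sub_cancel_left]
      exact ⟨_, rfl⟩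
  choose L hL1 hL2 using key
  have uniq : ∀ pq (v : comp k V pq) (y : M),
      (∀ N, y - psum k V h g pq (N + 1) v ∈ LinearMap.range (h ^ N)) → L pq v = y := by
    intro pq v y hy
    refine sub_eq_zero.1 (sep _ fun N => ?_)
    have := Submodule.sub_mem _ (range_pow_succ_le k h N _ (hL2 pq v (N + 1))) (hy N)
    simpa using this
  let Ll : ∀ pq, comp k V pq →ₗ[k] M := fun pq =>
    { toFun := L pq
      map_add' := fun x y => uniq _ _ _ fun N => by
        have := Submodule.add_mem _ (hL2 pq x (N + 1)) (hL2 pq y (N + 1))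
        rw [map_add, add_sub_add_comm]
        exact range_pow_succ_le k h N _ this
      map_smul' := fun a x => uniq _ _ _ fun N => by
        have := Submodule.smul_mem _ a (hL2 pq x (N + 1))
        rw [map_smul, RingHom.id_apply, ← smul_sub]
        exact range_pow_succ_le k h N _ this }
  refine ⟨DirectSum.toModule k (ℤ × ℤ) M Ll, ?_, ?_, ?_⟩
  · intro x
    have : (DirectSum.toModule k (ℤ × ℤ) M Ll).comp (hbar k V) =
        h.comp (DirectSum.toModule k (ℤ × ℤ) M Ll) := by
      refine DirectSum.linearMap_ext _ fun pq => LinearMap.ext fun v => ?_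
      simp only [LinearMap.comp_apply, hbar, DirectSum.toModule_lof]
      refine uniq _ _ _ fun N => ?_
      rw [psum_shift, ← map_sub]
      exact map_range_pow k h N _ (hL2 pq v N)
    exact LinearMap.congr_fun this x
  · rintro pq _ ⟨v, rfl⟩
    rw [DirectSum.toModule_lof]
    exact hL1 pq v
  · refine DirectSum.linearMap_ext _ fun pq => LinearMap.ext fun v => ?_
    simp only [LinearMap.comp_apply, incl, DirectSum.toModule_lof]
    refine uniq _ _ _ fun N => ?_
    rw [psum_incl, sub_self]
    exact Submodule.zero_mem _

theorem decomp (pq : ℤ × ℤ) (v : comp k V pq) :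
    ∃ (x : Vtot k V) (pq' : ℤ × ℤ) (w : comp k V pq'),
      DirectSum.lof k (ℤ × ℤ) (fun pq => comp k V pq) pq v = incl k V x +
        hbar k V (DirectSum.lof k (ℤ × ℤ) (fun pq => comp k V pq) pq' w) := by
  obtain ⟨p, q⟩ := pq
  obtain ⟨p, rfl⟩ : ∃ p', p = p' - 1 := ⟨p + 1, by ring⟩
  obtain ⟨q, rfl⟩ : ∃ q', q = q' + 1 := ⟨q - 1, by ring⟩
  refine ⟨DirectSum.lof k (ℤ × ℤ) (fun pq => ((V pq : Type))) (p - 1, q + 1)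
    (castV k V (by simp) (v 0)), (p, q), fun r => castV k V (by
      simp only [Prod.mk.injEq]; constructor <;> (push_cast; ring)) (v (r + 1)), ?_⟩
  simp only [incl, hbar, DirectSum.toModule_lof, LinearMap.comp_apply]
  rw [← map_add]
  congr 1
  have cc : ∀ {a b c : ℤ × ℤ} (h1 : a = b) (h2 : b = c) (x : V a),
      castV k V h2 (castV k V h1 x) = castV k V (h1.trans h2) x := by
    intro a b c h1 h2 x; subst h1; subst h2; rfl
  funext r
  cases r with
  | zero =>
    change v 0 = castV k V _ (castV k V _ (v 0)) + 0
    rw [cc, add_zero]; rfl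
  | succ r =>
    change v (r + 1) = 0 + castV k V _ (castV k V _ (v (r + 1)))
    rw [cc, zero_add]; rfl

theorem ext_unique (h : M →ₗ[k] M)
    (sep : ∀ x, (∀ N : ℕ, x ∈ LinearMap.range (h ^ N)) → x = 0)
    (d : Vh k V →ₗ[k] M) (hd : ∀ x, d (hbar k V x) = h (d x))
    (h0 : ∀ x, d (incl k V x) = 0) : d = 0 := by
  refine DirectSum.linearMap_ext _ fun pq => LinearMap.ext fun v => sep _ fun N => ?_
  rw [LinearMap.comp_apply]
  induction N generalizing pq with
  | zero => exact ⟨_, rfl⟩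
  | succ N ih =>
    obtain ⟨x, _, w, e⟩ := decomp k V pq v
    obtain ⟨y, hy⟩ := ih _ w
    rw [e, map_add, h0, zero_add, hd, ← hy]
    exact ⟨y, by rw [pow_succ', Module.End.mul_apply]⟩

end

end Paper

namespace Paper

/-- If `M` is a bigraded complete `k[ħ]`-module (with `ħ` acting by
`h`, separated and componentwise complete) and `V` is a bigraded `k`-module, then the
restriction map `Hom_{k[ħ]}(V[[ħ]]^{bgr}, M) → Hom_k(V, M)` (precomposition with
`v ↦ v ⊗ 1`) is an isomorphism of the internal hom spaces of bigraded modules: every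
internal-hom morphism `g : V → M` extends uniquely to an `ħ`-equivariant internal-hom
morphism `f : V[[ħ]]^{bgr} → M`. -/
theorem statement6 (k : Type) [CommRing k] (V : ℤ × ℤ → ModuleCat.{0} k)
    {M : Type} [AddCommGroup M] [Module k M]
    (GM : ℤ × ℤ → Submodule k M) (hint : DirectSum.IsInternal GM)
    (h : M →ₗ[k] M)
    (hhom : ∀ (pq : ℤ × ℤ) (x : M), x ∈ GM pq → h x ∈ GM (pq.1 - 1, pq.2 + 1))
    (sep : (⨅ N : ℕ, LinearMap.range (h ^ N)) = ⊥)
    (hcompl : ∀ (pq : ℤ × ℤ) (x : ℕ → M), (∀ N, x N ∈ GM pq) →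
      (∀ N, x (N+1) - x N ∈ LinearMap.range (h ^ N)) →
      ∃ y ∈ GM pq, ∀ N, y - x N ∈ LinearMap.range (h ^ N)) :
    ∀ g : Vtot k V →ₗ[k] M, IsInternalHom k (VtotGr k V) GM g →
      ∃! f : Vh k V →ₗ[k] M,
        (∀ x, f (hbar k V x) = h (f x)) ∧
        IsInternalHom k (VhGr k V) GM f ∧
        f.comp (incl k V) = g := by
  have sep' : ∀ x, (∀ N : ℕ, x ∈ LinearMap.range (h ^ N)) → x = 0 := by
    intro x hx
    rw [← Submodule.mem_bot k, ← sep, Submodule.mem_iInf]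
    exact hx
  rintro g ⟨S, gc, hgc, rfl⟩
  choose f hf1 hf2 hf3 using fun c => exists_ext k V GM h hhom sep' hcompl c (gc c) (hgc c)
  have A : ∀ x, (∑ c ∈ S, f c) (hbar k V x) = h ((∑ c ∈ S, f c) x) := by
    intro x
    simp only [LinearMap.sum_apply, map_sum, hf1]
  have B : (∑ c ∈ S, f c).comp (incl k V) = ∑ c ∈ S, gc c := by
    refine LinearMap.ext fun x => ?_
    simp only [LinearMap.comp_apply, LinearMap.sum_apply]
    exact Finset.sum_congr rfl fun c _ => LinearMap.congr_fun (hf3 c) x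
  refine ⟨∑ c ∈ S, f c, ⟨A, ⟨S, f, hf2, rfl⟩, B⟩, ?_⟩
  rintro f' ⟨A', -, B'⟩
  refine sub_eq_zero.1 (ext_unique k V h sep' _ ?_ ?_)
  · intro x
    rw [LinearMap.sub_apply, LinearMap.sub_apply, A, A', map_sub]
  · intro x
    have := LinearMap.congr_fun (B'.trans B.symm) x
    rw [LinearMap.sub_apply, sub_eq_zero]
    exact this

end Paper
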